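/- Let E be a real inner product space, let a > 0 be a real number, and let u₁, u₂, w₁, w₂ be unit vectors in E satisfying (u₁ + u₂) + a·(w₁ + w₂) = 0. Then cos(θ₁/2) = a·cos(θ₂/2), where θ₁ ∈ [0, π] is the angle between u₁ and u₂ and θ₂ ∈ [0, π] is the angle between w₁ and w₂. -/

import Mathlib

section HalfAngle

open InnerProductGeometry

variable {E : Type*} [NormedAddCommGroup E] [InnerProductSpace ℝ E]

theorem cos_half_angle_nonneg (x y : E) : 0 ≤ Real.cos (angle x y / 2) :=
  Real.cos_nonneg_of_mem_Icc
    ⟨by linarith [angle_nonneg x y, Real.pi_pos], by linarith [angle_le_pi x y]⟩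

theorem norm_add_eq_two_mul_norm_mul_cos_half_angle {x y : E} (h : ‖x‖ = ‖y‖) :
    ‖x + y‖ = 2 * ‖x‖ * Real.cos (angle x y / 2) := by
  have hsq : ‖x + y‖ ^ 2 = (2 * ‖x‖ * Real.cos (angle x y / 2)) ^ 2 :=
    calc
      ‖x + y‖ ^ 2 = 2 * ‖x‖ ^ 2 * (1 + Real.cos (angle x y)) := by
        rw [norm_add_sq_real, ← cos_angle_mul_norm_mul_norm, ← h]
        ring
      _ = (2 * ‖x‖ * Real.cos (angle x y / 2)) ^ 2 := by
        rw [mul_pow, Real.cos_sq, mul_div_cancel₀ _ (two_ne_zero' ℝ)]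
        ring
  have hnonneg : 0 ≤ 2 * ‖x‖ * Real.cos (angle x y / 2) :=
    mul_nonneg (by positivity) (cos_half_angle_nonneg x y)
  exact (sq_eq_sq₀ (norm_nonneg _) hnonneg).mp hsq

end HalfAngle

/-- Balance equation of the stationary figure eight: if `u₁, u₂, w₁, w₂` are unit
vectors with `(u₁ + u₂) + a • (w₁ + w₂) = 0` and `a > 0`, then
`cos(θ₁/2) = a cos(θ₂/2)` for the angles `θ₁` between `u₁, u₂` and `θ₂` between
`w₁, w₂`. -/
theorem figure_eight_balance
    {E : Type*} [NormedAddCommGroup E] [InnerProductSpace ℝ E]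
    (a : ℝ) (ha : 0 < a)
    (u₁ u₂ w₁ w₂ : E) (hu₁ : ‖u₁‖ = 1) (hu₂ : ‖u₂‖ = 1)
    (hw₁ : ‖w₁‖ = 1) (hw₂ : ‖w₂‖ = 1)
    (hstat : (u₁ + u₂) + a • (w₁ + w₂) = 0) :
    Real.cos (InnerProductGeometry.angle u₁ u₂ / 2)
      = a * Real.cos (InnerProductGeometry.angle w₁ w₂ / 2) := by
  have hnorm : ‖u₁ + u₂‖ = a * ‖w₁ + w₂‖ := by
    rw [eq_neg_of_add_eq_zero_left hstat, norm_neg, norm_smul, Real.norm_of_nonneg ha.le]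
  have hu : ‖u₁ + u₂‖ = 2 * Real.cos (InnerProductGeometry.angle u₁ u₂ / 2) := by
    rw [norm_add_eq_two_mul_norm_mul_cos_half_angle (hu₁.trans hu₂.symm), hu₁, mul_one]
  have hw : ‖w₁ + w₂‖ = 2 * Real.cos (InnerProductGeometry.angle w₁ w₂ / 2) := by
    rw [norm_add_eq_two_mul_norm_mul_cos_half_angle (hw₁.trans hw₂.symm), hw₁, mul_one]
  rw [hu, hw] at hnorm
  linarith
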